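/- Let α ∈ (0,1), λ ∈ ℝ with K := 1 − λ(1−α) ≠ 0, set p := λα/K, and let u : [0,∞) → ℝ be continuously differentiable. Let x₀ ∈ ℝ satisfy the compatibility condition λ·x₀ + u(0) = 0. Then the function x(t) = (x₀/K)·e^{pt} + ((1−α)/K)·u(t) + (α/K²)·∫_0^t e^{p(t−τ)} u(τ) dτ is continuously differentiable, satisfies x(0) = x₀, and solves (1/(1−α)) ∫_0^t x′(τ) · exp((α/(α−1))·(t−τ)) dτ = λ·x(t) + u(t) for all t ≥ 0. -/

import Mathlib

open MeasureTheory intervalIntegral Real Set Filter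

/-! Put `k = α / (α - 1)`. As a function of `t`, `y = CF Δ^(α) x` is the Duhamel integral of
`(1 - α)⁻¹ x'` with rate `k`, i.e. the solution of `y' = k y + (1 - α)⁻¹ x'` with zero initial
value. Hence `CF Δ^(α) x = λ x + u` amounts to the compatibility condition at the base point
together with this ODE for `y = λ x + u`, which rearranges to
`K x' = α (λ x + u) + (1 - α) u'`. In the variable `w = K x - (1 - α) u` the derivative of `u`
disappears and the ODE becomes `w' = p w + (α / K) u`, which Duhamel's formula solves. -/

section DuhamelSolution

open scoped Topology

variable {E : Type*} [NormedAddCommGroup E] [NormedSpace ℝ E]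

/-- The solution of `w' = k w + f`, `w a = w₀` given by Duhamel's variation of constants formula. -/
noncomputable def duhamelSolution (k : ℝ) (f : ℝ → E) (a : ℝ) (w₀ : E) (t : ℝ) : E :=
  exp (k * (t - a)) • w₀ + ∫ τ in a..t, exp (k * (t - τ)) • f τ

variable {k : ℝ} {f : ℝ → E} {a t : ℝ} {w₀ : E} {s : Set ℝ}

@[simp]
theorem duhamelSolution_self : duhamelSolution k f a w₀ a = w₀ := by
  simp [duhamelSolution]

theorem duhamelSolution_eq_exp_smul :
    duhamelSolution k f a w₀ =
      fun t => exp (k * (t - a)) • (w₀ + ∫ τ in a..t, exp (k * (a - τ)) • f τ) := by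
  ext t
  have exp_split (τ : ℝ) : exp (k * (t - τ)) = exp (k * (t - a)) * exp (k * (a - τ)) := by
    rw [← exp_add]
    ring_nf
  rw [duhamelSolution, smul_add, ← intervalIntegral.integral_smul]
  simp only [smul_smul, ← exp_split]

theorem eq_duhamelSolution_of_hasDeriv_right [CompleteSpace E] {y : ℝ → E}
    (hcont : ContinuousOn y (uIcc a t))
    (hderiv : ∀ τ ∈ Ioo (min a t) (max a t), HasDerivWithinAt y (k • y τ + f τ) (Ioi τ) τ)
    (hf : IntervalIntegrable f volume a t) : y t = duhamelSolution k f a (y a) t := by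
  have hderiv_weighted : ∀ τ ∈ Ioo (min a t) (max a t),
      HasDerivWithinAt (fun τ => exp (k * (t - τ)) • y τ) (exp (k * (t - τ)) • f τ) (Ioi τ) τ := by
    intro τ hτ
    have hexp : HasDerivAt (fun τ => exp (k * (t - τ))) (exp (k * (t - τ)) * -k) τ := by
      simpa using (((hasDerivAt_id τ).const_sub t).const_mul k).exp
    refine (hexp.hasDerivWithinAt.smul (hderiv τ hτ)).congr_deriv ?_
    module
  have hint : IntervalIntegrable (fun τ => exp (k * (t - τ)) • f τ) volume a t :=
    hf.continuousOn_smul (by fun_prop)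
  have key := integral_eq_sub_of_hasDeriv_right (by fun_prop) hderiv_weighted hint
  simp [duhamelSolution, key]

theorem hasDerivWithinAt_integral_of_continuousOn [CompleteSpace E] [hs : OrdConnected s]
    (hf : ContinuousOn f s) (ha : a ∈ s) (ht : t ∈ s) :
    HasDerivWithinAt (fun b => ∫ τ in a..b, f τ) (f t) s t := by
  have := hs.measurableSet.nhdsWithin_isMeasurablyGenerated t
  have : TendstoIxxClass Ioc (𝓟 s) (𝓟 s) := tendstoIxxClass_of_subset fun _ _ => Ioc_subset_Icc_self
  have : FTCFilter t (𝓝[s] t) (𝓝[s] t) :=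
    { tendsto_Ixx := (tendstoIxxNhdsWithin t).tendsto_Ixx
      pure_le := pure_le_nhdsWithin ht
      le_nhds := inf_le_left }
  exact integral_hasDerivWithinAt_right (hf.mono (hs.uIcc_subset ha ht)).intervalIntegrable
    (hf.stronglyMeasurableAtFilter_nhdsWithin hs.measurableSet t) (hf t ht)

theorem hasDerivWithinAt_duhamelSolution [CompleteSpace E] [OrdConnected s]
    (hf : ContinuousOn f s) (ha : a ∈ s) (ht : t ∈ s) :
    HasDerivWithinAt (duhamelSolution k f a w₀) (k • duhamelSolution k f a w₀ t + f t) s t := by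
  have hexp : HasDerivAt (fun t => exp (k * (t - a))) (exp (k * (t - a)) * k) t := by
    simpa using (((hasDerivAt_id t).sub_const a).const_mul k).exp
  have hint := hasDerivWithinAt_integral_of_continuousOn
    (f := fun τ => exp (k * (a - τ)) • f τ) (by fun_prop) ha ht
  have hcancel : exp (k * (t - a)) * exp (k * (a - t)) = 1 := by simp [← exp_add, ← mul_add]
  rw [duhamelSolution_eq_exp_smul]
  refine (hexp.hasDerivWithinAt.smul (hint.const_add w₀)).congr_deriv ?_
  rw [smul_smul, hcancel]
  module

theorem contDiffOn_one_duhamelSolution [CompleteSpace E] [OrdConnected s]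
    (hf : ContinuousOn f s) (ha : a ∈ s) (hs : UniqueDiffOn ℝ s) :
    ContDiffOn ℝ 1 (duhamelSolution k f a w₀) s := by
  have hderiv (t : ℝ) (ht : t ∈ s) :
      HasDerivWithinAt (duhamelSolution k f a w₀) (k • duhamelSolution k f a w₀ t + f t) s t :=
    hasDerivWithinAt_duhamelSolution hf ha ht
  have hdiff : DifferentiableOn ℝ (duhamelSolution k f a w₀) s := fun t ht =>
    (hderiv t ht).differentiableWithinAt
  refine (contDiffOn_one_iff_derivWithin hs).2 ⟨hdiff, ?_⟩
  exact ((hdiff.continuousOn.const_smul k).add hf).congr fun t ht =>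
    (hderiv t ht).derivWithin (hs t ht)

end DuhamelSolution

section CaputoFabrizio

variable {E : Type*} [NormedAddCommGroup E] [NormedSpace ℝ E]

/-- The Caputo–Fabrizio fractional derivative of order `α` based at `a`, with normalization
`M(α) = 1`. The derivative of `x` is taken within `[a, ∞)`, hence one-sided at `a`. -/
noncomputable def caputoFabrizioDeriv (α a : ℝ) (x : ℝ → E) (t : ℝ) : E :=
  (1 / (1 - α)) • ∫ τ in a..t, exp ((α / (α - 1)) * (t - τ)) • derivWithin x (Ici a) τ

variable {α a t : ℝ} {x y : ℝ → E}

theorem caputoFabrizioDeriv_eq_duhamelSolution :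
    caputoFabrizioDeriv α a x t =
      duhamelSolution (α / (α - 1)) (fun τ => (1 / (1 - α)) • derivWithin x (Ici a) τ) a 0 t := by
  simp only [caputoFabrizioDeriv, duhamelSolution, smul_zero, zero_add,
    ← intervalIntegral.integral_smul, smul_comm (1 / (1 - α))]

theorem caputoFabrizioDeriv_eq_of_hasDerivWithinAt [CompleteSpace E]
    (hx : IntervalIntegrable (derivWithin x (Ici a)) volume a t) (hya : y a = 0)
    (hy : ∀ τ ∈ Ici a, HasDerivWithinAt y
      ((α / (α - 1)) • y τ + (1 / (1 - α)) • derivWithin x (Ici a) τ) (Ici a) τ)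
    (ht : a ≤ t) : caputoFabrizioDeriv α a x t = y t := by
  have hsub : uIcc a t ⊆ Ici a := by
    rw [uIcc_of_le ht]
    exact Icc_subset_Ici_self
  rw [caputoFabrizioDeriv_eq_duhamelSolution, ← hya]
  refine (eq_duhamelSolution_of_hasDeriv_right
    (fun τ hτ => (hy τ (hsub hτ)).continuousWithinAt.mono hsub) (fun τ hτ => ?_)
    (hx.smul (1 / (1 - α)))).symm
  have haτ : a ≤ τ := hsub (Ioo_subset_Icc_self hτ)
  exact (hy τ haτ).mono (Ioi_subset_Ici haτ)

theorem hasDerivWithinAt_of_eqOn_inv_smul_add {lam K p : ℝ}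
    (hK : K = 1 - lam * (1 - α)) (hK0 : K ≠ 0) (hp : p = lam * α / K) {s : Set ℝ} {u w : ℝ → E}
    {u' : E} (hu : HasDerivWithinAt u u' s t)
    (hw : HasDerivWithinAt w (p • w t + (α / K) • u t) s t)
    (hx : EqOn x (fun τ => K⁻¹ • (w τ + (1 - α) • u τ)) s) (ht : t ∈ s) :
    HasDerivWithinAt x (K⁻¹ • (α • (lam • x t + u t) + (1 - α) • u')) s t := by
  refine (((hw.add (hu.const_smul (1 - α))).const_smul K⁻¹).congr_of_mem hx ht).congr_deriv ?_
  rw [hx ht, hp]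
  match_scalars <;> field_simp
  rw [hK]
  ring

theorem hasDerivWithinAt_smul_add_of_ode {lam : ℝ} (hα : α ≠ 1) {s : Set ℝ}
    {u : ℝ → E} {x' u' : E} (hx : HasDerivWithinAt x x' s t) (hu : HasDerivWithinAt u u' s t)
    (hode : (1 - lam * (1 - α)) • x' = α • (lam • x t + u t) + (1 - α) • u') :
    HasDerivWithinAt (fun τ => lam • x τ + u τ)
      ((α / (α - 1)) • (lam • x t + u t) + (1 / (1 - α)) • x') s t := by
  have hα' : 1 - α ≠ 0 := sub_ne_zero.2 hα.symm
  refine ((hx.const_smul lam).add hu).congr_deriv ?_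
  rw [← neg_sub 1 α, div_neg]
  linear_combination (norm := (match_scalars <;> field_simp <;> ring)) (-(1 - α)⁻¹) • hode

theorem cf_linear_explicit_solution_general [CompleteSpace E] {lam : ℝ} (hα : α ≠ 1)
    {K : ℝ} (hK : K = 1 - lam * (1 - α)) (hK0 : K ≠ 0) {p : ℝ} (hp : p = lam * α / K)
    {u : ℝ → E} (hu : ContDiffOn ℝ 1 u (Ici a)) {x₀ : E} (hcomp : lam • x₀ + u a = 0)
    (hx : ∀ t ∈ Ici a, x t = (exp (p * (t - a)) / K) • x₀ + ((1 - α) / K) • u t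
      + (α / K ^ 2) • ∫ τ in a..t, exp (p * (t - τ)) • u τ) :
    ContDiffOn ℝ 1 x (Ici a) ∧ x a = x₀ ∧
      ∀ t ∈ Ici a, caputoFabrizioDeriv α a x t = lam • x t + u t := by
  let f : ℝ → E := fun τ => (α / K) • u τ
  let w : ℝ → E := duhamelSolution p f a x₀
  have hf : ContinuousOn f (Ici a) := hu.continuousOn.const_smul _
  have hxw : EqOn x (fun t => K⁻¹ • (w t + (1 - α) • u t)) (Ici a) := by
    intro t ht
    simp only [hx t ht, w, f, duhamelSolution, smul_comm _ (α / K), intervalIntegral.integral_smul]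
    module
  have hxC : ContDiffOn ℝ 1 x (Ici a) :=
    (((contDiffOn_one_duhamelSolution hf self_mem_Ici (uniqueDiffOn_Ici a)).add
      (hu.const_smul (1 - α))).const_smul K⁻¹).congr hxw
  have hxa : x a = x₀ := by
    simp only [hxw self_mem_Ici, w, duhamelSolution_self, eq_neg_of_add_eq_zero_right hcomp]
    rw [inv_smul_eq_iff₀ hK0, hK]
    module
  have hxint (t : ℝ) (ht : a ≤ t) : IntervalIntegrable (derivWithin x (Ici a)) volume a t :=
    ((hxC.continuousOn_derivWithin (uniqueDiffOn_Ici a) le_rfl).mono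
      Icc_subset_Ici_self).intervalIntegrable_of_Icc ht
  refine ⟨hxC, hxa, fun t ht => caputoFabrizioDeriv_eq_of_hasDerivWithinAt
    (y := fun τ => lam • x τ + u τ) (hxint t ht) (by rw [hxa, hcomp]) (fun τ hτ => ?_) ht⟩
  have hu' := (hu.differentiableOn one_ne_zero τ hτ).hasDerivWithinAt
  have hx' := hasDerivWithinAt_of_eqOn_inv_smul_add hK hK0 hp hu'
    (hasDerivWithinAt_duhamelSolution hf self_mem_Ici hτ) hxw hτ
  rw [hx'.derivWithin (uniqueDiffOn_Ici a τ hτ)]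
  exact hasDerivWithinAt_smul_add_of_ode hα hx' hu' (by rw [← hK, smul_inv_smul₀ hK0])

end CaputoFabrizio

/-- Explicit solution of the linear Caputo–Fabrizio equation
`(CF Δ^(α) x)(t) = λ x(t) + u(t)` on `𝕋 = ℝ`: with `K = 1 - λ(1-α) ≠ 0`, `p = λα/K`,
under the compatibility condition `λ x₀ + u 0 = 0`, the function
`x(t) = (x₀/K) e^{pt} + ((1-α)/K) u(t) + (α/K²) ∫_0^t e^{p(t-τ)} u(τ) dτ`
is `C¹` on `[0,∞)`, satisfies `x 0 = x₀`, and solves the equation for all `t ≥ 0`. -/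
theorem cf_linear_explicit_solution (α lam : ℝ) (hα : α ∈ Set.Ioo (0 : ℝ) 1)
    (K : ℝ) (hK : K = 1 - lam * (1 - α)) (hK0 : K ≠ 0)
    (p : ℝ) (hp : p = lam * α / K)
    (u : ℝ → ℝ) (hu : ContDiffOn ℝ 1 u (Set.Ici 0))
    (x₀ : ℝ) (hcomp : lam * x₀ + u 0 = 0)
    (x : ℝ → ℝ)
    (hx : ∀ t : ℝ, x t = (x₀ / K) * Real.exp (p * t) + ((1 - α) / K) * u t
        + (α / K ^ 2) * ∫ τ in (0 : ℝ)..t, Real.exp (p * (t - τ)) * u τ) :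
    ContDiffOn ℝ 1 x (Set.Ici 0) ∧ x 0 = x₀ ∧
      ∀ t : ℝ, 0 ≤ t →
        (1 / (1 - α)) *
          (∫ τ in (0 : ℝ)..t, derivWithin x (Set.Ici 0) τ * Real.exp ((α / (α - 1)) * (t - τ)))
        = lam * x t + u t := by
  simpa [caputoFabrizioDeriv, mul_comm] using
    cf_linear_explicit_solution_general hα.2.ne hK hK0 hp hu hcomp
      (fun t _ => by simp [hx t]; ring)
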